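/- arXiv:math/0108108 — 2 statements merged into one kernel-verified Lean document; each statement's English description precedes it below -/
import Mathlib

section
/- The KdV flows commute: [δₘ, δₙ] = 0 as derivations of 𝒜, for all m, n ≥ 0. -/
/- STATEMENT 2.  The KdV flows δₖ — the unique derivations of 𝒜 commuting with ∂
with δₖ(u₀) = ∂fₖ (hence δₖ(uₙ) = ∂^{n+1}fₖ) — commute: [δₘ,δₙ] = 0. -/

noncomputable section

/-- `K = ℚ((ε))`. -/
abbrev K : Type := LaurentSeries ℚ

/-- the loop expansion parameter `ε ∈ K`. -/
def eps : K := HahnSeries.single 1 1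

/-- `𝒜 = K[u₀,u₁,u₂,…]`, the algebra of differential polynomials (`uₙ = ∂ⁿu`). -/
abbrev A : Type := MvPolynomial ℕ K

/-- the derivation `∂` of `𝒜`, with `∂uₙ = uₙ₊₁`. -/
def d : Derivation K A A :=
  MvPolynomial.mkDerivation K (fun n => MvPolynomial.X (n + 1))

/-- the generalized binomial coefficient `C(i,j) = i(i−1)⋯(i−j+1)/j!` for `i : ℤ`. -/
def gch (i : ℤ) (j : ℕ) : ℚ :=
  (∏ l ∈ Finset.range j, ((i : ℚ) - l)) / (j.factorial : ℚ)

/-- pseudodifferential operators `Σ_{i ≤ N} aᵢ∂ⁱ`, represented by their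
coefficient functions `ℤ → 𝒜` (elements of `Ψ(𝒜)` are those with support
bounded above). -/
def Psi : Type := ℤ → A

/-- support of a pseudodifferential operator is bounded above. -/
def BddAbv (a : Psi) : Prop := ∃ N : ℤ, ∀ i : ℤ, N < i → a i = 0

/-- the product on `Ψ(𝒜)`, determined by `∂ⁱ·a = Σ_{j≥0} C(i,j)(∂ʲa)∂^{i−j}`:
the coefficient of `∂ⁿ` in `A·B` is `Σ_{i,j} C(i,j)·aᵢ·∂ʲ(b_{n−i+j})` (a finite
sum when the supports are bounded above). -/
def pmul (a b : Psi) : Psi := fun n =>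
  ∑ᶠ (i : ℤ) (j : ℕ), gch i j • (a i * (⇑d)^[j] (b (n - i + j)))

/-- the identity operator. -/
def onePsi : Psi := fun i => if i = 0 then 1 else 0

/-- the Lax operator `L = (1/2)ε²∂² + u₀`. -/
def Lax : Psi := fun i =>
  if i = 2 then MvPolynomial.C ((1/2 : ℚ) • eps ^ 2)
  else if i = 0 then MvPolynomial.X 0 else 0

/-- `∂² + 2ε⁻²u₀ = 2ε⁻²L`. -/
def Dsq : Psi := fun i =>
  if i = 2 then 1 else if i = 0 then MvPolynomial.C (2 * (eps ^ 2)⁻¹) * MvPolynomial.X 0 else 0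

/-- `D` is a square root of `∂² + 2ε⁻²u₀` of the form `∂ + (terms aᵢ∂ⁱ, i ≤ −1)`. -/
def IsD (D : Psi) : Prop :=
  pmul D D = Dsq ∧ D 1 = 1 ∧ D 0 = 0 ∧ ∀ i : ℤ, 2 ≤ i → D i = 0

/-- `Lᵏ`. -/
def Lpow (k : ℕ) : Psi := (pmul Lax)^[k] onePsi

/-- `LᵏD`. -/
def LD (D : Psi) (k : ℕ) : Psi := pmul (Lpow k) D

/-- the `k`-th Gelfand–Dickii polynomial `fₖ = ε²·a₋₁(k)`, where
`LᵏD = Σ aᵢ(k)∂ⁱ`. -/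
def GD (D : Psi) (k : ℕ) : A := MvPolynomial.C (eps ^ 2) * LD D k (-1)

/-- the operator `𝖪g = (1/8)ε²∂³g + u₀·∂g + (1/2)∂(u₀·g)`. -/
def Kop (g : A) : A :=
  MvPolynomial.C ((1/8 : ℚ) • eps ^ 2) * (⇑d)^[3] g + MvPolynomial.X 0 * d g
    + (1/2 : ℚ) • d (MvPolynomial.X 0 * g)

/-- the `k`-th KdV flow: the unique derivation of `𝒜` commuting with `∂` with
`δₖ(u₀) = ∂fₖ`, i.e. `δₖ(uₙ) = ∂^{n+1}fₖ`. -/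
def kdv (D : Psi) (k : ℕ) : Derivation K A A :=
  MvPolynomial.mkDerivation K (fun n => (⇑d)^[n + 1] (GD D k))

/-!
`D` is a square root of `Q = ∂² + 2ε⁻²u₀`, so `LᵏD` lies in the commutative algebra `K[D]`. Write
`M₊` for the differential part of an operator `M`. If `M ∈ K[D]`, then `[M₊, Q] = [Q, M - M₊]` is a
differential operator of order at most `0`, namely `2∂(res M)`; hence `δₖQ = [(LᵏD)₊, Q]`. Since no
nonzero operator anticommutes with `D`, this Lax equation passes from `Q = D²` to `D`, and so to all
of `K[D]`. With `M = LᵐD` and `N = LⁿD`, it follows that `δₘ(res N) - δₙ(res M)` is the residue of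
`[M₊, N] - [N₊, M] = [M₊, N₊] - [M - M₊, N - N₊]`, where the first bracket is a differential
operator and the second has order at most `-3`. So `δₘfₙ = δₙfₘ`, and the flows commute on every
`uᵢ`.

Associativity of the product reduces to `∂ⁱ(bc) = (∂ⁱb)c`, which spreads from `i = 1` to all `i ∈ ℤ`
because left multiplication by `∂` is injective.
-/

section PseudodifferentialOperators

open Finset
open Function hiding Commute

variable {k R : Type*} [CommRing k] [CommRing R] [Algebra k R]

variable (k R) in
/-- The coefficient functions of formal series `∑ aᵢ∂ⁱ` whose powers of `∂` are bounded above. -/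
def boundedOrder : Submodule k (ℤ → R) where
  carrier := {a | ∃ N, ∀ i, N < i → a i = 0}
  zero_mem' := ⟨0, fun _ _ => rfl⟩
  add_mem' := by
    rintro a b ⟨N, ha⟩ ⟨M, hb⟩
    refine ⟨max N M, fun i hi => ?_⟩
    simp [ha i ((le_max_left N M).trans_lt hi), hb i ((le_max_right N M).trans_lt hi)]
  smul_mem' := by
    rintro c a ⟨N, ha⟩
    exact ⟨N, fun i hi => by simp [ha i hi]⟩

/-- Formal pseudodifferential operators `∑ aᵢ∂ⁱ` over a differential algebra `(R, d)`, encoded by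
their coefficient functions. The derivation enters only through the product. -/
def PsiDO (_d : Derivation k R R) : Type _ := boundedOrder k R

namespace PsiDO

variable {d : Derivation k R R}

instance : AddCommGroup (PsiDO d) := inferInstanceAs (AddCommGroup (boundedOrder k R))

instance : Module k (PsiDO d) := inferInstanceAs (Module k (boundedOrder k R))

/-- The operator with coefficient function `f`. -/
def mk (f : ℤ → R) (hf : ∃ N, ∀ i, N < i → f i = 0) : PsiDO d :=
  Subtype.mk (p := (· ∈ boundedOrder k R)) f hf

instance : FunLike (PsiDO d) ℤ R where
  coe := Subtype.val
  coe_injective := Subtype.val_injective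

@[ext] theorem ext {a b : PsiDO d} (h : ∀ i, a i = b i) : a = b := DFunLike.ext a b h

@[simp] theorem zero_apply (i : ℤ) : (0 : PsiDO d) i = 0 := rfl
@[simp] theorem add_apply (a b : PsiDO d) (i : ℤ) : (a + b) i = a i + b i := rfl
@[simp] theorem sub_apply (a b : PsiDO d) (i : ℤ) : (a - b) i = a i - b i := rfl
@[simp] theorem smul_apply (c : k) (a : PsiDO d) (i : ℤ) : (c • a) i = c • a i := rfl

/-- The order of the operator `a` is at most `N`. -/
def OrderLE (a : PsiDO d) (N : ℤ) : Prop := ∀ i, N < i → a i = 0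

theorem exists_orderLE (a : PsiDO d) : ∃ N, OrderLE a N := a.2

theorem OrderLE.mono {a : PsiDO d} {N M : ℤ} (h : OrderLE a N) (hNM : N ≤ M) : OrderLE a M :=
  fun i hi => h i (hNM.trans_lt hi)

theorem eq_zero_of_forall_orderLE_sub_one {a : PsiDO d}
    (h : ∀ N, OrderLE a N → OrderLE a (N - 1)) : a = 0 := by
  obtain ⟨N, hN⟩ := a.exists_orderLE
  have hsub (n : ℕ) : OrderLE a (N - n) := by
    induction n with
    | zero => simpa using hN
    | succ n ih => simpa [sub_sub] using h _ ih
  ext i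
  exact hsub (N - i + 1).toNat i (by omega)

/-- The operator `r∂ⁱ`. -/
def single (i : ℤ) (r : R) : PsiDO d :=
  mk (fun n => if n = i then r else 0) ⟨i, fun _ hn => if_neg hn.ne'⟩

theorem single_apply (i : ℤ) (r : R) (n : ℤ) :
    (single i r : PsiDO d) n = if n = i then r else 0 := rfl

theorem hasFiniteSupport_dPowMul (i : ℤ) (b : PsiDO d) (n : ℤ) :
    HasFiniteSupport fun j : ℕ => Ring.choose i j • d^[j] (b (n - i + j)) := by
  obtain ⟨M, hb⟩ := b.exists_orderLE
  refine (Set.finite_lt_nat (M - n + i + 1).toNat).subset fun j hj => ?_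
  by_contra hj'
  rw [Set.mem_ofPred_eq, not_lt] at hj'
  exact hj (by simp [hb (n - i + j) (by omega)])

/-- Left multiplication `b ↦ ∂ⁱ ∘ b`, expanded by the generalized Leibniz rule. -/
def dPowMul (i : ℤ) : PsiDO d →ₗ[k] PsiDO d where
  toFun b := mk (fun n => ∑ᶠ j : ℕ, Ring.choose i j • d^[j] (b (n - i + j))) <| by
    obtain ⟨M, hb⟩ := b.exists_orderLE
    refine ⟨M + i, fun n hn => finsum_eq_zero_of_forall_eq_zero fun j => ?_⟩
    simp [hb (n - i + j) (by omega)]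
  map_add' a b := by
    ext n
    refine Eq.trans ?_
      (finsum_add_distrib (hasFiniteSupport_dPowMul i a n) (hasFiniteSupport_dPowMul i b n))
    exact finsum_congr fun j => by simp [iterate_map_add]
  map_smul' c b := by
    ext n
    refine Eq.trans ?_ (smul_finsum' c (hasFiniteSupport_dPowMul i b n)).symm
    refine finsum_congr fun j => ?_
    have hd : d^[j] (c • b (n - i + j)) = c • d^[j] (b (n - i + j)) :=
      Semiconj.iterate_right (f := (c • ·)) (fun x => (d.map_smul c x).symm) j _ |>.symm
    rw [smul_apply, hd, smul_comm]

theorem dPowMul_apply (i : ℤ) (b : PsiDO d) (n : ℤ) :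
    dPowMul i b n = ∑ᶠ j : ℕ, Ring.choose i j • d^[j] (b (n - i + j)) := rfl

theorem dPowMul_apply_eq_sum {b : PsiDO d} {M : ℤ} (hb : OrderLE b M) (i : ℤ) {n : ℤ} {m : ℕ}
    (hm : M < n - i + m) :
    dPowMul i b n = ∑ j ∈ range m, Ring.choose i j • d^[j] (b (n - i + j)) := by
  refine finsum_eq_finsetSum_of_support_subset _ fun j hj => ?_
  by_contra hj'
  rw [coe_range, Set.mem_Iio, not_lt] at hj'
  exact hj (by simp [hb (n - i + j) (by omega)])

theorem OrderLE.dPowMul {b : PsiDO d} {M : ℤ} (hb : OrderLE b M) (i : ℤ) :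
    OrderLE (dPowMul i b) (M + i) := fun n hn => by
  rw [dPowMul_apply_eq_sum hb i (m := 0) (by push_cast; omega), sum_range_zero]

theorem dPowMul_apply_add {b : PsiDO d} {M : ℤ} (hb : OrderLE b M) (i : ℤ) :
    dPowMul i b (M + i) = b M := by
  simp [dPowMul_apply_eq_sum hb i (n := M + i) (m := 1) (by omega)]

theorem dPowMul_apply_add_sub_one {b : PsiDO d} {M : ℤ} (hb : OrderLE b M) (i : ℤ) :
    dPowMul i b (M + i - 1) = b (M - 1) + i * d (b M) := by
  rw [dPowMul_apply_eq_sum hb i (m := 2) (by push_cast; omega), sum_range_succ, sum_range_one]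
  have h (j : ℤ) : M + i - 1 - i + j = M - 1 + j := by ring
  simp [h]

@[simp] theorem dPowMul_zero (b : PsiDO d) : dPowMul 0 b = b := by
  ext n
  rw [dPowMul_apply, finsum_eq_single _ 0]
  · simp
  · intro j hj
    rw [Ring.choose_zero_pos ℤ (Nat.pos_of_ne_zero hj), zero_smul]

theorem dPowMul_add_one_apply (i : ℤ) (b : PsiDO d) (n : ℤ) :
    dPowMul (i + 1) b n = d (dPowMul i b n) + dPowMul i b (n - 1) := by
  obtain ⟨M, hb⟩ := b.exists_orderLE
  obtain ⟨m, hm⟩ : ∃ m : ℕ, M - n + i + 2 ≤ m := ⟨_, Int.self_le_toNat _⟩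
  rw [dPowMul_apply_eq_sum hb (i + 1) (m := m + 1) (by omega),
    dPowMul_apply_eq_sum hb i (n := n) (m := m) (by omega),
    dPowMul_apply_eq_sum hb i (n := n - 1) (m := m + 1) (by omega), sum_range_succ',
    sum_range_succ' _ m, map_sum, ← add_assoc, ← sum_add_distrib]
  congr 1
  · refine sum_congr rfl fun j _ => ?_
    rw [Ring.choose_succ_succ, add_smul, map_zsmul, ← iterate_succ_apply' d]
    have h : n - (i + 1) + (j + 1 : ℕ) = n - i + j := by push_cast; ring
    have h' : n - 1 - i + (j + 1 : ℕ) = n - i + j := by push_cast; ring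
    rw [h, h']
  · simp [sub_sub, add_comm]

/-- The coefficientwise action of a derivation of the coefficients on operators. -/
def mapCoeff (δ : Derivation k R R) : PsiDO d →ₗ[k] PsiDO d where
  toFun a := mk (fun i => δ (a i)) <| by
    obtain ⟨N, ha⟩ := a.exists_orderLE
    exact ⟨N, fun i hi => by simp [ha i hi]⟩
  map_add' a b := by ext i; exact map_add δ (a i) (b i)
  map_smul' c a := by ext i; exact δ.map_smul c (a i)

@[simp] theorem mapCoeff_apply (δ : Derivation k R R) (a : PsiDO d) (i : ℤ) :
    mapCoeff δ a i = δ (a i) := rfl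

theorem mapCoeff_dPowMul {δ : Derivation k R R} (hδ : Function.Commute δ d) (i : ℤ)
    (b : PsiDO d) : mapCoeff δ (dPowMul i b) = dPowMul i (mapCoeff δ b) := by
  ext n
  rw [mapCoeff_apply, dPowMul_apply, dPowMul_apply, map_finsum δ (hasFiniteSupport_dPowMul i b n)]
  refine finsum_congr fun j => ?_
  rw [map_zsmul, mapCoeff_apply, (hδ.iterate_right j).eq]

/-- Right multiplication `a ↦ a ∘ ∂`. -/
def mulD (a : PsiDO d) : PsiDO d :=
  mk (fun i => a (i - 1)) <| by
    obtain ⟨N, ha⟩ := a.exists_orderLE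
    exact ⟨N + 1, fun i hi => ha (i - 1) (by omega)⟩

theorem mulD_apply (a : PsiDO d) (i : ℤ) : mulD a i = a (i - 1) := rfl

theorem dPowMul_mulD (i : ℤ) (a : PsiDO d) : dPowMul i (mulD a) = mulD (dPowMul i a) := by
  ext n
  refine finsum_congr fun j => ?_
  rw [mulD_apply]
  congr 3
  ring

theorem dPowMul_one (a : PsiDO d) : dPowMul 1 a = mapCoeff d a + mulD a := by
  ext n
  simpa [mulD_apply] using dPowMul_add_one_apply 0 a n

theorem dPowMul_add_one (i : ℤ) (b : PsiDO d) : dPowMul (i + 1) b = dPowMul 1 (dPowMul i b) := by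
  ext n
  rw [dPowMul_add_one_apply, dPowMul_one, add_apply, mapCoeff_apply, mulD_apply]

theorem dPowMul_one_comm (i : ℤ) (b : PsiDO d) :
    dPowMul 1 (dPowMul i b) = dPowMul i (dPowMul 1 b) := by
  rw [dPowMul_one, dPowMul_one, map_add, mapCoeff_dPowMul (Function.Commute.refl d), dPowMul_mulD]

theorem dPowMul_one_injective : Injective (dPowMul (d := d) 1) := by
  refine (injective_iff_map_eq_zero _).2 fun b hb =>
    eq_zero_of_forall_orderLE_sub_one fun N hN n hn => ?_
  rcases (show N ≤ n by omega).eq_or_lt with rfl | hn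
  · rw [← dPowMul_apply_add hN 1, hb, zero_apply]
  · exact hN n hn

theorem hasFiniteSupport_mul (a b : PsiDO d) (n : ℤ) :
    HasFiniteSupport fun i => a i * dPowMul i b n := by
  obtain ⟨N, ha⟩ := a.exists_orderLE
  obtain ⟨M, hb⟩ := b.exists_orderLE
  refine (Set.finite_Icc (n - M) N).subset fun i hi => ?_
  by_contra hi'
  rw [Set.mem_Icc, not_and_or, not_le, not_le] at hi'
  exact hi (hi'.elim (fun h => by simp [hb.dPowMul i n (by omega)]) fun h => by simp [ha i h])

instance : Mul (PsiDO d) where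
  mul a b := mk (fun n => ∑ᶠ i, a i * dPowMul i b n) <| by
    obtain ⟨N, ha⟩ := a.exists_orderLE
    obtain ⟨M, hb⟩ := b.exists_orderLE
    refine ⟨N + M, fun n hn => finsum_eq_zero_of_forall_eq_zero fun i => ?_⟩
    rcases lt_or_ge N i with hi | hi
    · simp [ha i hi]
    · simp [hb.dPowMul i n (by omega)]

theorem mul_apply (a b : PsiDO d) (n : ℤ) : (a * b) n = ∑ᶠ i, a i * dPowMul i b n := rfl

theorem mul_apply_eq_sum {a b : PsiDO d} {N M : ℤ} (ha : OrderLE a N) (hb : OrderLE b M) {m n : ℤ}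
    (hm : m ≤ n - M) : (a * b) n = ∑ i ∈ Icc m N, a i * dPowMul i b n := by
  refine finsum_eq_finsetSum_of_support_subset _ fun i hi => ?_
  by_contra hi'
  rw [coe_Icc, Set.mem_Icc, not_and_or, not_le, not_le] at hi'
  exact hi (hi'.elim (fun h => by simp [hb.dPowMul i n (by omega)]) fun h => by simp [ha i h])

theorem OrderLE.mul {a b : PsiDO d} {N M : ℤ} (ha : OrderLE a N) (hb : OrderLE b M) :
    OrderLE (a * b) (N + M) := fun n hn => by
  rw [mul_apply_eq_sum ha hb (m := n - M) le_rfl, Icc_eq_empty (by omega), sum_empty]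

theorem mul_apply_add {a b : PsiDO d} {N M : ℤ} (ha : OrderLE a N) (hb : OrderLE b M) :
    (a * b) (N + M) = a N * b M := by
  rw [mul_apply_eq_sum ha hb (m := N) (by omega), Icc_self, sum_singleton, add_comm N,
    dPowMul_apply_add hb]

theorem mul_apply_add_sub_one {a b : PsiDO d} {N M : ℤ} (ha : OrderLE a N) (hb : OrderLE b M) :
    (a * b) (N + M - 1) = a N * b (M - 1) + N * (a N * d (b M)) + a (N - 1) * b M := by
  have hIcc : Icc (N - 1) N = {N - 1, N} := by
    ext i
    simp only [mem_Icc, mem_insert, mem_singleton]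
    omega
  rw [mul_apply_eq_sum ha hb (m := N - 1) (by omega), hIcc, sum_pair (by omega),
    add_comm N, dPowMul_apply_add_sub_one hb, add_sub_assoc, dPowMul_apply_add hb]
  ring

instance : NonUnitalNonAssocRing (PsiDO d) where
  left_distrib a b c := by
    ext n
    refine Eq.trans (finsum_congr fun i => ?_)
      (finsum_add_distrib (hasFiniteSupport_mul a b n) (hasFiniteSupport_mul a c n))
    rw [map_add, add_apply, mul_add]
  right_distrib a b c := by
    ext n
    refine Eq.trans (finsum_congr fun i => ?_)
      (finsum_add_distrib (hasFiniteSupport_mul a c n) (hasFiniteSupport_mul b c n))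
    rw [add_apply, add_mul]
  zero_mul a := by
    ext n
    simp [mul_apply]
  mul_zero a := by
    ext n
    simp [mul_apply]

theorem mapCoeff_mul {δ : Derivation k R R} (hδ : Function.Commute δ d) (a b : PsiDO d) :
    mapCoeff δ (a * b) = mapCoeff δ a * b + a * mapCoeff δ b := by
  ext n
  rw [mapCoeff_apply, mul_apply, map_finsum δ (hasFiniteSupport_mul a b n), add_apply, mul_apply,
    mul_apply, ← finsum_add_distrib (hasFiniteSupport_mul _ b n) (hasFiniteSupport_mul a _ n)]
  refine finsum_congr fun i => ?_
  rw [Derivation.leibniz, ← mapCoeff_dPowMul hδ, mapCoeff_apply, mapCoeff_apply]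
  simp only [smul_eq_mul]
  ring

theorem mulD_mul (a b : PsiDO d) : mulD (a * b) = a * mulD b := by
  ext n
  rw [mulD_apply, mul_apply, mul_apply]
  simp only [dPowMul_mulD, mulD_apply]

theorem mulD_mul_eq_mul_dPowMul (a b : PsiDO d) : mulD a * b = a * dPowMul 1 b := by
  ext n
  rw [mul_apply, mul_apply, ← finsum_comp_equiv (Equiv.addRight (1 : ℤ))]
  refine finsum_congr fun i => ?_
  rw [Equiv.coe_addRight, mulD_apply, add_sub_cancel_right, dPowMul_add_one,
    dPowMul_one_comm]

theorem dPowMul_one_mul (b c : PsiDO d) : dPowMul 1 (b * c) = dPowMul 1 b * c := by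
  rw [dPowMul_one, dPowMul_one, mapCoeff_mul (Function.Commute.refl d), mulD_mul, add_mul,
    mulD_mul_eq_mul_dPowMul, dPowMul_one, mul_add, add_assoc]

theorem dPowMul_mul (i : ℤ) (b c : PsiDO d) : dPowMul i (b * c) = dPowMul i b * c := by
  induction i with
  | zero => simp
  | succ i ih => rw [dPowMul_add_one, ih, dPowMul_one_mul, ← dPowMul_add_one]
  | pred i ih =>
    apply dPowMul_one_injective
    rw [dPowMul_one_mul, ← dPowMul_add_one, ← dPowMul_add_one, sub_add_cancel, ih]

protected theorem mul_assoc (a b c : PsiDO d) : a * b * c = a * (b * c) := by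
  obtain ⟨N, ha⟩ := a.exists_orderLE
  obtain ⟨M, hb⟩ := b.exists_orderLE
  obtain ⟨P, hc⟩ := c.exists_orderLE
  ext n
  calc (a * b * c) n
      = ∑ l ∈ Icc (n - P) (N + M), (∑ i ∈ Icc (n - P - M) N, a i * dPowMul i b l) *
          dPowMul l c n := by
        rw [mul_apply_eq_sum (ha.mul hb) hc le_rfl]
        refine sum_congr rfl fun l hl => ?_
        rw [mul_apply_eq_sum ha hb (m := n - P - M) (by rw [mem_Icc] at hl; omega)]
    _ = ∑ i ∈ Icc (n - P - M) N, a i * ∑ l ∈ Icc (n - P) (N + M),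
          dPowMul i b l * dPowMul l c n := by
        simp only [sum_mul, mul_sum, mul_assoc]
        exact sum_comm
    _ = ∑ i ∈ Icc (n - P - M) N, a i * dPowMul i (b * c) n := by
        refine sum_congr rfl fun i hi => ?_
        have hbi : OrderLE (dPowMul i b) (N + M) :=
          (hb.dPowMul i).mono (by rw [mem_Icc] at hi; omega)
        rw [dPowMul_mul, mul_apply_eq_sum hbi hc le_rfl]
    _ = (a * (b * c)) n := (mul_apply_eq_sum ha (hb.mul hc) (by omega)).symm

instance : One (PsiDO d) := ⟨single 0 1⟩

theorem one_def : (1 : PsiDO d) = single 0 1 := rfl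

theorem dPowMul_one_eq_single (i : ℤ) : dPowMul i (1 : PsiDO d) = single i 1 := by
  ext n
  rw [dPowMul_apply, finsum_eq_single _ 0]
  · simp [one_def, single_apply, sub_eq_zero]
  · intro j hj
    obtain ⟨j, rfl⟩ := Nat.exists_eq_succ_of_ne_zero hj
    rw [one_def, single_apply, iterate_succ_apply]
    split_ifs <;> simp

instance : Ring (PsiDO d) where
  __ := (inferInstance : NonUnitalNonAssocRing (PsiDO d))
  mul_assoc := PsiDO.mul_assoc
  one_mul a := by
    ext n
    rw [mul_apply, finsum_eq_single _ 0]
    · simp [one_def, single_apply]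
    · intro i hi
      rw [one_def, single_apply, if_neg hi, zero_mul]
  mul_one a := by
    ext n
    rw [mul_apply, finsum_eq_single _ n]
    · simp [dPowMul_one_eq_single, single_apply]
    · intro i hi
      rw [dPowMul_one_eq_single, single_apply, if_neg hi.symm, mul_zero]

instance : Algebra k (PsiDO d) := Algebra.ofModule
  (fun c a b => by
    ext n
    rw [smul_apply, mul_apply, mul_apply, smul_finsum' c (hasFiniteSupport_mul a b n)]
    exact finsum_congr fun i => smul_mul_assoc c (a i) (dPowMul i b n))
  (fun c a b => by
    ext n
    rw [smul_apply, mul_apply, mul_apply, smul_finsum' c (hasFiniteSupport_mul a b n)]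
    refine finsum_congr fun i => ?_
    rw [map_smul, smul_apply, mul_smul_comm])

theorem algebraMap_apply (c : k) (i : ℤ) :
    algebraMap k (PsiDO d) c i = c • (1 : PsiDO d) i := rfl

theorem mul_apply_of_neg {a b : PsiDO d} (ha : ∀ i < 0, a i = 0) (hb : ∀ i < 0, b i = 0) :
    ∀ n < 0, (a * b) n = 0 := by
  refine fun n hn => finsum_eq_zero_of_forall_eq_zero fun i => ?_
  rcases lt_or_ge i 0 with hi | hi
  · rw [ha i hi, zero_mul]
  lift i to ℕ using hi
  rw [dPowMul_apply, finsum_eq_zero_of_forall_eq_zero, mul_zero]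
  intro j
  rcases lt_or_ge i j with hj | hj
  · rw [Ring.choose_natCast, Nat.choose_eq_zero_of_lt hj, Nat.cast_zero, zero_smul]
  · rw [hb _ (by omega), iterate_map_zero, smul_zero]

variable (d) in
/-- The differential operators `∑_{i ≥ 0} aᵢ∂ⁱ`. -/
def diffOps : Subalgebra k (PsiDO d) where
  carrier := {a | ∀ i < 0, a i = 0}
  mul_mem' := mul_apply_of_neg
  add_mem' ha hb i hi := by rw [add_apply, ha i hi, hb i hi, add_zero]
  algebraMap_mem' c i hi := by
    rw [algebraMap_apply, one_def, single_apply, if_neg hi.ne, smul_zero]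

/-- The differential part `a₊ = ∑_{i ≥ 0} aᵢ∂ⁱ` of `a`. -/
def diffPart (a : PsiDO d) : PsiDO d :=
  mk (fun i => if 0 ≤ i then a i else 0) <| by
    obtain ⟨N, ha⟩ := a.exists_orderLE
    exact ⟨N, fun i hi => by simp [ha i hi]⟩

theorem diffPart_apply (a : PsiDO d) (i : ℤ) : diffPart a i = if 0 ≤ i then a i else 0 := rfl

theorem diffPart_mem_diffOps (a : PsiDO d) : diffPart a ∈ diffOps d :=
  fun _ hi => if_neg hi.not_ge

theorem sub_diffPart_apply_of_neg (a : PsiDO d) {i : ℤ} (hi : i < 0) :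
    (a - diffPart a) i = a i := by
  rw [sub_apply, diffPart_apply, if_neg hi.not_ge, sub_zero]

theorem orderLE_sub_diffPart (a : PsiDO d) : OrderLE (a - diffPart a) (-1) := fun i hi => by
  rw [sub_apply, diffPart_apply, if_pos (by omega), sub_self]

attribute [local instance] LieRing.ofAssociativeRing

theorem lie_mem_diffOps {a b : PsiDO d} (ha : a ∈ diffOps d) (hb : b ∈ diffOps d) :
    ⁅a, b⁆ ∈ diffOps d :=
  sub_mem (mul_mem ha hb) (mul_mem hb ha)

theorem lie_apply_add_sub_one {a b : PsiDO d} {N M : ℤ} (ha : OrderLE a N) (hb : OrderLE b M) :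
    ⁅a, b⁆ (N + M - 1) = N * (a N * d (b M)) - M * (b M * d (a N)) := by
  rw [Ring.lie_def, sub_apply, mul_apply_add_sub_one ha hb, add_comm N, mul_apply_add_sub_one hb ha]
  ring

theorem OrderLE.lie {a b : PsiDO d} {N M : ℤ} (ha : OrderLE a N) (hb : OrderLE b M) :
    OrderLE ⁅a, b⁆ (N + M - 1) := fun n hn => by
  rw [Ring.lie_def, sub_apply]
  rcases (show N + M ≤ n by omega).eq_or_lt with rfl | hn
  · rw [mul_apply_add ha hb, add_comm, mul_apply_add hb ha, mul_comm, sub_self]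
  · rw [ha.mul hb n hn, hb.mul ha n (by omega), sub_zero]

variable (d) in
/-- The Schrödinger operator `∂² + v`, which is the KdV Lax operator up to a scalar. -/
def schrodinger (v : R) : PsiDO d := single 2 1 + single 0 v

theorem schrodinger_mem_diffOps (v : R) : schrodinger d v ∈ diffOps d := fun i hi => by
  rw [schrodinger, add_apply, single_apply, single_apply, if_neg (by omega), if_neg (by omega),
    add_zero]

theorem orderLE_schrodinger (v : R) : OrderLE (schrodinger d v) 2 := fun i hi => by
  rw [schrodinger, add_apply, single_apply, single_apply, if_neg (by omega), if_neg (by omega),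
    add_zero]

theorem mapCoeff_schrodinger (δ : Derivation k R R) (v : R) :
    mapCoeff δ (schrodinger d v) = single 0 (δ v) := by
  ext i
  rw [schrodinger, mapCoeff_apply, add_apply, single_apply, single_apply, single_apply]
  split_ifs <;> simp

theorem lie_diffPart_schrodinger {a : PsiDO d} {v : R} (h : Commute a (schrodinger d v)) :
    ⁅diffPart a, schrodinger d v⁆ = (single 0 (2 * d (a (-1))) : PsiDO d) := by
  have hlie : ⁅diffPart a, schrodinger d v⁆ = ⁅schrodinger d v, a - diffPart a⁆ := by
    rw [lie_sub, h.symm.lie_eq, zero_sub, lie_skew]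
  have hmem : ⁅diffPart a, schrodinger d v⁆ ∈ diffOps d :=
    lie_mem_diffOps (diffPart_mem_diffOps a) (schrodinger_mem_diffOps v)
  have hord : OrderLE ⁅diffPart a, schrodinger d v⁆ 0 := by
    rw [hlie]
    exact (orderLE_schrodinger v).lie (orderLE_sub_diffPart a)
  ext i
  rcases lt_trichotomy i 0 with hi | rfl | hi
  · rw [hmem i hi, single_apply, if_neg hi.ne]
  · have h0 := lie_apply_add_sub_one (orderLE_schrodinger v) (orderLE_sub_diffPart a)
    rw [hlie, single_apply, if_pos rfl, show (0 : ℤ) = 2 + -1 - 1 by rfl, h0,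
      sub_diffPart_apply_of_neg a neg_one_lt_zero]
    simp [schrodinger, single_apply]
  · rw [hord i hi, single_apply, if_neg hi.ne']

theorem eq_zero_of_mul_add_mul_eq_zero [IsAddTorsionFree R] {a x : PsiDO d} {N : ℤ}
    (ha : OrderLE a N) (haN : a N = 1) (h : x * a + a * x = 0) : x = 0 := by
  refine eq_zero_of_forall_orderLE_sub_one fun M hM i hi => ?_
  rcases (show M ≤ i by omega).eq_or_lt with rfl | hi
  · have hM' : (x * a + a * x) (M + N) = 2 • x M := by
      rw [add_apply, mul_apply_add hM ha, add_comm M, mul_apply_add ha hM, haN, mul_one, one_mul,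
        two_nsmul]
    rw [h, zero_apply, eq_comm] at hM'
    exact (nsmul_eq_zero_iff_right two_ne_zero).1 hM'
  · exact hM i hi

/-- The operators evolving by the Lax equation `δa = ⁅p, a⁆`. -/
def laxSubalgebra {δ : Derivation k R R} (hδ : Function.Commute δ d) (p : PsiDO d) :
    Subalgebra k (PsiDO d) where
  carrier := {a | mapCoeff δ a = ⁅p, a⁆}
  mul_mem' {a b} ha hb := by
    rw [Set.mem_ofPred_eq] at *
    rw [mapCoeff_mul hδ, ha, hb, Ring.lie_def, Ring.lie_def, Ring.lie_def]
    noncomm_ring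
  add_mem' {a b} ha hb := by
    rw [Set.mem_ofPred_eq] at *
    rw [map_add, ha, hb, lie_add]
  algebraMap_mem' c := by
    rw [Set.mem_ofPred_eq, (Algebra.commute_algebraMap_right c p).lie_eq]
    ext i
    rw [mapCoeff_apply, algebraMap_apply, one_def, single_apply, smul_ite, zero_apply]
    split_ifs <;> simp

theorem mem_laxSubalgebra {δ : Derivation k R R} {hδ : Function.Commute δ d} {p a : PsiDO d} :
    a ∈ laxSubalgebra hδ p ↔ mapCoeff δ a = ⁅p, a⁆ := Iff.rfl

theorem mem_laxSubalgebra_of_mul_self_mem [IsAddTorsionFree R] {δ : Derivation k R R}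
    {hδ : Function.Commute δ d} {p a : PsiDO d} {N : ℤ} (ha : OrderLE a N) (haN : a N = 1)
    (h : a * a ∈ laxSubalgebra hδ p) : a ∈ laxSubalgebra hδ p := by
  refine sub_eq_zero.1 (eq_zero_of_mul_add_mul_eq_zero ha haN ?_)
  rw [mem_laxSubalgebra, mapCoeff_mul hδ, ← sub_eq_zero, Ring.lie_def] at h
  rw [Ring.lie_def, ← h]
  noncomm_ring

theorem residue_symm {δ δ' : Derivation k R R} {hδ : Function.Commute δ d}
    {hδ' : Function.Commute δ' d} {a b : PsiDO d} (hab : Commute a b)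
    (hb : b ∈ laxSubalgebra hδ (diffPart a)) (ha : a ∈ laxSubalgebra hδ' (diffPart b)) :
    δ (b (-1)) = δ' (a (-1)) := by
  have hdecomp : ⁅diffPart a, b⁆ - ⁅diffPart b, a⁆ =
      ⁅diffPart a, diffPart b⁆ - ⁅a - diffPart a, b - diffPart b⁆ := by
    rw [sub_lie, lie_sub, lie_sub, hab.lie_eq, ← lie_skew a]
    abel
  have hdiff : ⁅diffPart a, diffPart b⁆ ∈ diffOps d :=
    lie_mem_diffOps (diffPart_mem_diffOps a) (diffPart_mem_diffOps b)
  have hord : OrderLE ⁅a - diffPart a, b - diffPart b⁆ (-3) :=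
    (orderLE_sub_diffPart a).lie (orderLE_sub_diffPart b)
  rw [← sub_eq_zero, ← mapCoeff_apply, ← mapCoeff_apply, ← sub_apply, mem_laxSubalgebra.1 hb,
    mem_laxSubalgebra.1 ha, hdecomp, sub_apply, hdiff (-1) (by norm_num), hord (-1) (by norm_num),
    sub_zero]

theorem adjoin_le_laxSubalgebra [IsAddTorsionFree R] {D a : PsiDO d} {v : R} (hD : OrderLE D 1)
    (hD1 : D 1 = 1) (hDD : D * D = schrodinger d v) (ha : a ∈ Algebra.adjoin k {D})
    {δ : Derivation k R R} (hδ : Function.Commute δ d) (hv : δ v = 2 * d (a (-1))) :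
    Algebra.adjoin k {D} ≤ laxSubalgebra hδ (diffPart a) := by
  have hcomm : Commute a (schrodinger d v) := by
    have haD : Commute a D := (Algebra.commute_of_mem_adjoin_self ha).symm
    exact hDD ▸ haD.mul_right haD
  refine Algebra.adjoin_le (Set.singleton_subset_iff.2 ?_)
  refine mem_laxSubalgebra_of_mul_self_mem hD hD1 ?_
  rw [hDD, mem_laxSubalgebra, mapCoeff_schrodinger, hv, lie_diffPart_schrodinger hcomm]

theorem residue_symm_of_mul_self_eq_schrodinger [IsAddTorsionFree R] {D a b : PsiDO d} {v : R}
    (hD : OrderLE D 1) (hD1 : D 1 = 1) (hDD : D * D = schrodinger d v)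
    (ha : a ∈ Algebra.adjoin k {D}) (hb : b ∈ Algebra.adjoin k {D}) {δ δ' : Derivation k R R}
    (hδ : Function.Commute δ d) (hδ' : Function.Commute δ' d) (hδv : δ v = 2 * d (a (-1)))
    (hδ'v : δ' v = 2 * d (b (-1))) : δ (b (-1)) = δ' (a (-1)) := by
  have hab : Commute a b := Algebra.commute_of_mem_adjoin_of_forall_mem_commute hb fun c hc => by
    rw [Set.mem_singleton_iff.1 hc]
    exact (Algebra.commute_of_mem_adjoin_self ha).symm
  exact residue_symm hab (adjoin_le_laxSubalgebra hD hD1 hDD ha hδ hδv hb)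
    (adjoin_le_laxSubalgebra hD hD1 hDD hb hδ' hδ'v ha)

end PsiDO

end PseudodifferentialOperators

open MvPolynomial in
theorem derivation_commute_of_X {σ S : Type*} [CommRing S]
    {δ δ' : Derivation S (MvPolynomial σ S) (MvPolynomial σ S)}
    (h : ∀ i, δ (δ' (X i)) = δ' (δ (X i))) : Function.Commute δ δ' := fun x => by
  have hlie : ⁅δ, δ'⁆ = 0 := derivation_ext fun i => by
    rw [Derivation.commutator_apply, h, sub_self, Derivation.zero_apply]
  rw [← sub_eq_zero, ← Derivation.commutator_apply, hlie, Derivation.zero_apply]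

section KdV

open Function MvPolynomial PsiDO

theorem gch_eq_choose (i : ℤ) (j : ℕ) : gch i j = (Ring.choose i j : ℤ) := by
  have h := Ring.descPochhammer_eq_factorial_smul_choose i j
  rw [← Polynomial.eval_eq_smeval, descPochhammer_eval_eq_prod_range, nsmul_eq_mul] at h
  rw [gch, div_eq_iff (by positivity), mul_comm]
  exact_mod_cast h

-- `Int.cast_smul_eq_zsmul` does not unify here: `ℚ` acts on `A` through power series over `ℚ`.
theorem intCast_smul_eq_zsmul (z : ℤ) (x : A) : (z : ℚ) • x = z • x :=
  (Algebra.smul_def _ _).trans (by rw [map_intCast, zsmul_eq_mul])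

theorem pmul_coe (a b : PsiDO d) : pmul ⇑a ⇑b = ⇑(a * b) := by
  funext n
  refine finsum_congr fun i => ?_
  rw [dPowMul_apply, mul_finsum' _ _ (hasFiniteSupport_dPowMul i b n)]
  refine finsum_congr fun j => ?_
  rw [gch_eq_choose, mul_smul_comm]
  exact intCast_smul_eq_zsmul _ _

theorem Lpow_eq {a : PsiDO d} (ha : Lax = ⇑a) (k : ℕ) : Lpow k = ⇑(a ^ k) := by
  induction k with
  | zero => rfl
  | succ k ih => rw [Lpow, iterate_succ_apply', ← Lpow, ih, ha, pmul_coe, pow_succ']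

theorem eps_ne_zero : eps ≠ 0 := HahnSeries.single_ne_zero one_ne_zero

/-- The potential `2ε⁻²u₀` of `2ε⁻²L`. -/
def potential : A := (2 * (eps ^ 2)⁻¹) • X 0

theorem Dsq_eq : Dsq = ⇑(schrodinger d potential) := by
  funext i
  rw [schrodinger, PsiDO.add_apply, single_apply, single_apply, potential, smul_eq_C_mul, Dsq]
  split_ifs <;> simp_all

theorem Lax_eq : Lax = ⇑(((1 / 2 : ℚ) • eps ^ 2) • schrodinger d potential) := by
  have hc : (1 / 2 : ℚ) • eps ^ 2 * (2 * (eps ^ 2)⁻¹) = 1 := by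
    rw [← mul_assoc, mul_comm _ 2, two_mul, ← add_smul, add_halves, one_smul,
      mul_inv_cancel₀ (pow_ne_zero 2 eps_ne_zero)]
  funext i
  rw [PsiDO.smul_apply, ← Dsq_eq, Lax, Dsq]
  split_ifs
  · rw [smul_eq_C_mul, mul_one]
  · rw [smul_eq_C_mul, ← mul_assoc, ← map_mul, hc, map_one, one_mul]
  · rw [smul_zero]

/-- A square root of `∂² + 2ε⁻²u₀` as an element of the ring of pseudodifferential operators. -/
def IsD.toPsiDO {D : Psi} (hD : IsD D) : PsiDO d := mk D ⟨1, hD.2.2.2⟩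

namespace IsD

variable {D : Psi} (hD : IsD D)

theorem coe_toPsiDO : ⇑hD.toPsiDO = D := rfl

theorem orderLE_toPsiDO : OrderLE hD.toPsiDO 1 := hD.2.2.2

theorem toPsiDO_one : hD.toPsiDO 1 = 1 := hD.2.1

theorem toPsiDO_mul_toPsiDO : hD.toPsiDO * hD.toPsiDO = schrodinger d potential :=
  DFunLike.coe_injective <| by rw [← pmul_coe, coe_toPsiDO, hD.1, Dsq_eq]

theorem exists_mem_adjoin_coe_eq_LD (k : ℕ) :
    ∃ a ∈ Algebra.adjoin K {hD.toPsiDO}, ⇑a = LD D k := by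
  have hmem : hD.toPsiDO ∈ Algebra.adjoin K {hD.toPsiDO} := Algebra.self_mem_adjoin_singleton K _
  refine ⟨(((1 / 2 : ℚ) • eps ^ 2) • schrodinger d potential) ^ k * hD.toPsiDO, ?_, ?_⟩
  · rw [← hD.toPsiDO_mul_toPsiDO]
    exact mul_mem (pow_mem (Subalgebra.smul_mem _ (mul_mem hmem hmem) _) k) hmem
  · rw [LD, Lpow_eq Lax_eq, ← pmul_coe, coe_toPsiDO]

end IsD

theorem d_X (i : ℕ) : d (X i) = X (i + 1) := mkDerivation_X _ _ _

theorem kdv_X (D : Psi) (k i : ℕ) : kdv D k (X i) = d^[i + 1] (GD D k) := mkDerivation_X _ _ _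

theorem commute_kdv_d (D : Psi) (k : ℕ) : Function.Commute (kdv D k) d :=
  derivation_commute_of_X fun i => by
    rw [d_X, kdv_X, kdv_X, iterate_succ_apply' d (i + 1)]

theorem GD_eq_smul (D : Psi) (k : ℕ) : GD D k = eps ^ 2 • LD D k (-1) := (smul_eq_C_mul _ _).symm

theorem kdv_potential (D : Psi) (k : ℕ) : kdv D k potential = 2 * d (LD D k (-1)) := by
  rw [potential, Derivation.map_smul, kdv_X, zero_add, iterate_one, GD_eq_smul,
    Derivation.map_smul, smul_smul, inv_mul_cancel_right₀ (pow_ne_zero 2 eps_ne_zero),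
    smul_eq_C_mul, map_ofNat]

theorem kdv_GD_symm {D : Psi} (hD : IsD D) (m n : ℕ) :
    kdv D m (GD D n) = kdv D n (GD D m) := by
  have : IsAddTorsionFree A := IsAddTorsionFree.of_module_rat A
  obtain ⟨a, ha, haD⟩ := hD.exists_mem_adjoin_coe_eq_LD m
  obtain ⟨b, hb, hbD⟩ := hD.exists_mem_adjoin_coe_eq_LD n
  have hres : kdv D m (b (-1)) = kdv D n (a (-1)) :=
    residue_symm_of_mul_self_eq_schrodinger hD.orderLE_toPsiDO hD.toPsiDO_one
      hD.toPsiDO_mul_toPsiDO ha hb (commute_kdv_d D m) (commute_kdv_d D n)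
      (haD ▸ kdv_potential D m) (hbD ▸ kdv_potential D n)
  rw [GD_eq_smul, GD_eq_smul, Derivation.map_smul, Derivation.map_smul, ← haD, ← hbD, hres]

end KdV

theorem kdv_flows_commute (D : Psi) (hD : IsD D) (m n : ℕ) (x : A) :
    kdv D m (kdv D n x) = kdv D n (kdv D m x) := by
  refine derivation_commute_of_X (fun i => ?_) x
  have hd (k : ℕ) : Function.Commute (kdv D k) d^[i + 1] := (commute_kdv_d D k).iterate_right _
  rw [kdv_X, kdv_X, (hd m).eq, (hd n).eq, kdv_GD_symm hD m n]

end
end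

section
/- For every k ≥ 1, the following identity holds in B: 𝒟z_k − ∇z_{k+1} = Σ_{m≥0} ( cₖ^{m+1}·tₘ·y_{m+k} + cₖᵐ·s̃ₘ·x_{m+k} + 2dₖᵐ·s̃ₘ·y_{m+k−1} ) + Σ_{i+j=k, i,j≥1} i!·j!·( ε²·∂_{i−1,Q}(y_{j−1}) + Δ⟨⟨τ_{i−1,Q}⟩⟩·y_{j−1} ). -/
/- STATEMENT 16.  For every k ≥ 1, in the large phase space ring B:
𝒟z_k − ∇z_{k+1} = Σₘ( cₖ^{m+1}·tₘ·y_{m+k} + cₖᵐ·s̃ₘ·x_{m+k} + 2dₖᵐ·s̃ₘ·y_{m+k−1} )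
+ Σ_{i+j=k, i,j≥1} i!·j!·( ε²·∂_{i−1,Q}(y_{j−1}) + Δ⟨⟨τ_{i−1,Q}⟩⟩·y_{j−1} ). -/

noncomputable section

/-- index set for the variables of the large phase space of ℂP¹:
`none` is the genus parameter `ε`, `some (inl k)` is `sₖ`, `some (inr k)` is `tₖ`. -/
abbrev Idx : Type := Option (ℕ ⊕ ℕ)

/-- `ℚ[q]`. -/
abbrev Base : Type := Polynomial ℚ

/-- the large phase space ring `B = ℚ[q][[ε]][[s₀,s₁,…,t₀,t₁,…]]`, realized as
formal power series over `ℚ[q]` in `ε` and the `sₖ`, `tₖ`. -/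
abbrev B : Type := MvPowerSeries Idx Base

/-- coefficient extraction. -/
def cf (f : B) (m : Idx →₀ ℕ) : Base := f m

/-- build a power series from its coefficients. -/
def mk' (c : (Idx →₀ ℕ) → Base) : B := c

/-- the variable `sₖ`. -/
def sVar (k : ℕ) : B := MvPowerSeries.X (some (Sum.inl k))

/-- the variable `tₖ`. -/
def tVar (k : ℕ) : B := MvPowerSeries.X (some (Sum.inr k))

/-- the genus parameter `ε`. -/
def epsB : B := MvPowerSeries.X none

/-- `∂_{k,P} = ∂/∂sₖ`, coefficientwise. -/
def pdP (k : ℕ) (f : B) : B :=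
  mk' fun m => ((m (some (Sum.inl k)) : Base) + 1) *
    cf f (m + Finsupp.single (some (Sum.inl k)) 1)

/-- `∂_{k,Q} = ∂/∂tₖ`, coefficientwise. -/
def pdQ (k : ℕ) (f : B) : B :=
  mk' fun m => ((m (some (Sum.inr k)) : Base) + 1) *
    cf f (m + Finsupp.single (some (Sum.inr k)) 1)

/-- `∂ = ∂_{0,P}`. -/
def Dop : B → B := pdP 0

/-- `E^c = exp(cε∂) = Σₘ (cε)ᵐ∂ᵐ/m!`, well defined coefficientwise. -/
def Ec (c : ℚ) (f : B) : B :=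
  mk' fun m => ∑ j ∈ Finset.range (m none + 1),
    (c ^ j / (j.factorial : ℚ)) • cf (Dop^[j] f) (m - Finsupp.single none j)

/-- `∇ = ε⁻¹(E^{1/2} − E^{−1/2}) = Σ_{m≥1} (((1/2)ᵐ − (−1/2)ᵐ)/m!) εᵐ⁻¹ ∂ᵐ`,
well defined coefficientwise (the `m = 0` terms cancel, so no negative powers
of `ε` occur). -/
def nab (f : B) : B :=
  mk' fun m => ∑ j ∈ Finset.range (m none + 1),
    (((1/2 : ℚ) ^ (j+1) - (-1/2 : ℚ) ^ (j+1)) / ((j+1).factorial : ℚ)) •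
      cf (Dop^[j+1] f) (m - Finsupp.single none j)

/-- `Δ = E^{1/2} + E^{−1/2}`, coefficientwise. -/
def Delta (f : B) : B :=
  mk' fun m => ∑ j ∈ Finset.range (m none + 1),
    (((1/2 : ℚ) ^ j + (-1/2 : ℚ) ^ j) / (j.factorial : ℚ)) •
      cf (Dop^[j] f) (m - Finsupp.single none j)

variable (F : B)

/-- `⟨⟨τ_{i,Q}⟩⟩` for `i : ℤ`, with the convention `τ_{−1,Q} = 0`. -/
def tauQ (i : ℤ) : B := if 0 ≤ i then pdQ i.toNat F else 0

/-- `⟨⟨τ_{i,P}⟩⟩` for `i : ℤ`, with the convention `τ_{−1,P} = 0`. -/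
def tauP (i : ℤ) : B := if 0 ≤ i then pdP i.toNat F else 0

/-- `v = ∇∂_QF`. -/
def vB : B := nab (pdQ 0 F)

/-- the operator `𝒟 = v∇ + Δ∘∂_Q`. -/
def Dcal (g : B) : B := vB F * nab g + Delta (pdQ 0 g)

/-- `cₖᵐ = m(m+1)⋯(m+k)` (for `k ≥ −1`; the empty product `1` when `k = −1`). -/
def cc (k : ℤ) (m : ℕ) : ℚ := ∏ l ∈ Finset.range (k + 1).toNat, ((m : ℚ) + l)

/-- `dₖᵐ = eₖ(m, m+1, …, m+k)`, the `k`-th elementary symmetric function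
(`d₋₁ᵐ = 0`, `d₀ᵐ = 1`). -/
def dd (k : ℤ) (m : ℕ) : ℚ :=
  ∑ j ∈ Finset.range (k + 1).toNat,
    ∏ l ∈ (Finset.range (k + 1).toNat).erase j, ((m : ℚ) + l)

/-- the quadratic part `Σ_{i+j=k, i,j≥1} i!·j!·(ε²⟨⟨τ_{i−1,Q}τ_{j−1,Q}⟩⟩ +
⟨⟨τ_{i−1,Q}⟩⟩⟨⟨τ_{j−1,Q}⟩⟩)` of the Virasoro constraint. -/
def quad (k : ℤ) : B :=
  ∑ i ∈ Finset.range (k - 1).toNat,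
    (((i+1).factorial * ((k - (i+1)).toNat.factorial) : ℚ)) •
      (epsB ^ 2 * pdQ i (pdQ ((k - (i+2)).toNat) F) + pdQ i F * pdQ ((k - (i+2)).toNat) F)

/-- the Virasoro constraint `z_k`, `k ≥ −1`: the infinite sums
`Σₘ cₖ^{m+1}tₘ⟨⟨τ_{m+k,Q}⟩⟩ + cₖᵐsₘ⟨⟨τ_{m+k,P}⟩⟩ + 2dₖᵐsₘ⟨⟨τ_{m+k−1,Q}⟩⟩` are
well defined coefficientwise; the terms `s̃ₘ = sₘ − δ_{m,1}` contribute
the corrections `−cₖ¹⟨⟨τ_{k+1,P}⟩⟩ − 2dₖ¹⟨⟨τ_{k,Q}⟩⟩`. -/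
def z (k : ℤ) : B :=
  mk' (fun μ => ∑ j ∈ μ.support,
    match j with
    | some (Sum.inr m) => cc k (m+1) • cf (tauQ F ((m : ℤ) + k)) (μ - Finsupp.single j 1)
    | some (Sum.inl m) => cc k m • cf (tauP F ((m : ℤ) + k)) (μ - Finsupp.single j 1)
        + (2 * dd k m) • cf (tauQ F ((m : ℤ) + k - 1)) (μ - Finsupp.single j 1)
    | none => 0)
  - cc k 1 • tauP F (1 + k) - (2 * dd k 1) • tauQ F k
  + quad F k
  + (if k = -1 then sVar 0 * tVar 0 else 0)
  + (if k = 0 then sVar 0 ^ 2 else 0)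

/-- the constraint `y_k = 𝒟⟨⟨τ_{k,Q}⟩⟩ − (k+2)∇⟨⟨τ_{k+1,Q}⟩⟩`. -/
def y (k : ℕ) : B := Dcal F (pdQ k F) - ((k : ℚ) + 2) • nab (pdQ (k+1) F)

/-- the constraint `x_k = 𝒟⟨⟨τ_{k,P}⟩⟩ − (k+1)∇⟨⟨τ_{k+1,P}⟩⟩ − 2∇⟨⟨τ_{k,Q}⟩⟩`. -/
def x (k : ℕ) : B :=
  Dcal F (pdP k F) - ((k : ℚ) + 1) • nab (pdP (k+1) F) - (2 : ℚ) • nab (pdQ k F)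

/-! `E^c` is the exponential of the derivation `cε∂`, hence multiplicative. This gives the Leibniz
rules `2∇(fg) = ∇f·Δg + Δf·∇g` and `2Δ(fg) = Δf·Δg + ε²·∇f·∇g`, and from them one for `𝒟`.

The symmetric rules apply directly to the quadratic part of `z_k`, whose sum is invariant under
`i ↔ j`. Compared with `𝒟` of it, `∇` of the quadratic part of `z_{k+1}` has one more term, `i = k`.

On the linear part, `𝒟` and `∇` commute with multiplication by `sₘ` and `tₘ` except at `s₀` and
`t₀`, which are the only variables not killed by `∂` and `∂_Q`. The recursions
`cₖ₊₁ᵐ = cₖᵐ(m+k+1)` and `dₖ₊₁ᵐ = dₖᵐ(m+k+1) + cₖᵐ` turn the commuting terms into `x` and `y`; the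
`Δ⟨⟨τ_{k,Q}⟩⟩` contributions of `t₀` to `𝒟z_k` and of `s₀` to `∇z_{k+1}` cancel, and what `s₀`
contributes to `𝒟z_k` is the term `i = k` left over from the quadratic part. -/

open MvPowerSeries
open Finset.HasAntidiagonal (antidiagonal mem_antidiagonal)
open scoped Nat MvPowerSeries.WithPiTopology

section DerivationExp

variable {R A : Type*} [CommSemiring R] [CommRing A] [Algebra R A]

theorem derivation_iterate_mul (D : Derivation R A A) (n : ℕ) (a b : A) :
    D^[n] (a * b) = ∑ p ∈ antidiagonal n, n.choose p.1 • (D^[p.1] a * D^[p.2] b) := by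
  induction n with
  | zero => simp
  | succ n ih =>
    rw [Finset.sum_antidiagonal_choose_succ_nsmul fun i j => D^[i] a * D^[j] b,
      Function.iterate_succ_apply', ih, map_sum, ← Finset.sum_add_distrib]
    refine Finset.sum_congr rfl fun p hp => ?_
    rw [map_nsmul, D.leibniz, Function.iterate_succ_apply' D, Function.iterate_succ_apply' D,
      ← Nat.choose_symm_of_eq_add (mem_antidiagonal.1 hp).symm, smul_eq_mul, smul_eq_mul,
      mul_comm (D^[p.2] b), nsmul_add]

theorem inv_factorial_smul_derivation_iterate_mul [Algebra ℚ A] (D : Derivation R A A) (n : ℕ)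
    (a b : A) :
    (n ! : ℚ)⁻¹ • D^[n] (a * b) =
      ∑ p ∈ antidiagonal n, ((p.1 ! : ℚ)⁻¹ • D^[p.1] a) * ((p.2 ! : ℚ)⁻¹ • D^[p.2] b) := by
  rw [derivation_iterate_mul, Finset.smul_sum]
  refine Finset.sum_congr rfl fun p hp => ?_
  obtain rfl := mem_antidiagonal.1 hp
  rw [smul_mul_smul_comm, ← Nat.cast_smul_eq_nsmul ℚ, smul_smul, Nat.cast_add_choose]
  congr 1
  field_simp

theorem nonarchimedeanRing_of_isLinearTopology (A : Type*) [Ring A] [TopologicalSpace A]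
    [IsTopologicalRing A] [IsLinearTopology A A] : NonarchimedeanRing A where
  is_nonarchimedean U hU := by
    obtain ⟨I, hI, hIU⟩ := IsLinearTopology.hasBasis_open_ideal.mem_iff.1 hU
    exact ⟨⟨I.toAddSubgroup, hI⟩, hIU⟩

theorem hasSum_antidiagonal_mul {A : Type*} [Ring A] [TopologicalSpace A] [IsTopologicalRing A]
    [IsLinearTopology A A] {f g : ℕ → A} {a b : A} (hf : HasSum f a) (hg : HasSum g b) :
    HasSum (fun n => ∑ p ∈ antidiagonal n, f p.1 * g p.2) (a * b) := by
  let _ := IsTopologicalAddGroup.rightUniformSpace A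
  have := isUniformAddGroup_of_addCommGroup (G := A)
  have := nonarchimedeanRing_of_isLinearTopology A
  have hprod := (Finset.HasAntidiagonal.sigmaAntidiagonalEquivProd (A := ℕ)).hasSum_iff.2
    (hf.mul_of_nonarchimedean hg)
  refine hprod.sigma fun n => ?_
  rw [← Finset.sum_coe_sort]
  exact hasSum_fintype _

theorem hasSum_derivation_exp_mul [Algebra ℚ A] [TopologicalSpace A] [IsTopologicalRing A]
    [IsLinearTopology A A] (D : Derivation R A A) {a b s t : A}
    (ha : HasSum (fun n => (n ! : ℚ)⁻¹ • D^[n] a) s)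
    (hb : HasSum (fun n => (n ! : ℚ)⁻¹ • D^[n] b) t) :
    HasSum (fun n => (n ! : ℚ)⁻¹ • D^[n] (a * b)) (s * t) := by
  simpa only [inv_factorial_smul_derivation_iterate_mul] using hasSum_antidiagonal_mul ha hb

theorem derivation_smul_iterate_apply (D : Derivation R A A) {a : A} (ha : D a = 0) (n : ℕ)
    (b : A) : (a • D)^[n] b = a ^ n * D^[n] b := by
  induction n with
  | zero => simp
  | succ n ih =>
    rw [Function.iterate_succ_apply', ih, Function.iterate_succ_apply', Derivation.smul_apply,
      D.leibniz, D.leibniz_pow, ha]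
    simp only [smul_eq_mul, mul_zero, smul_zero, add_zero]
    ring

end DerivationExp

section MvPowerSeries

variable {σ R : Type*} [CommSemiring R]

theorem pderiv_pderiv_comm (i j : σ) (f : MvPowerSeries σ R) :
    pderiv R i (pderiv R j f) = pderiv R j (pderiv R i f) := by
  rcases eq_or_ne i j with rfl | hij
  · rfl
  ext m
  simp only [coeff_pderiv, add_right_comm m (Finsupp.single i 1), Finsupp.add_apply,
    Finsupp.single_eq_of_ne hij, Finsupp.single_eq_of_ne hij.symm, add_zero]
  ring

theorem pderiv_pderiv_X (i j l : σ) : pderiv R i (pderiv R j (X l)) = 0 := by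
  classical
  rcases eq_or_ne l j with rfl | h
  · rw [pderiv_X_self, pderiv_one]
  · rw [pderiv_X_of_ne h, map_zero]

theorem coeff_X_pow_mul_eq_ite (i : σ) (n : ℕ) (f : MvPowerSeries σ R) (m : σ →₀ ℕ) :
    coeff m (X i ^ n * f) = if n ≤ m i then coeff (m - Finsupp.single i n) f else 0 := by
  simp only [X_pow_eq, coeff_monomial_mul, one_mul, Finsupp.single_le_iff]

variable [TopologicalSpace R]

theorem continuous_pderiv [ContinuousMul R] (i : σ) :
    Continuous (pderiv R i : MvPowerSeries σ R → MvPowerSeries σ R) :=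
  continuous_pi fun m => by
    change Continuous fun f => coeff m (pderiv R i f)
    simp only [coeff_pderiv]
    exact (WithPiTopology.continuous_coeff R _).mul continuous_const

theorem hasSum_X_pow_mul {i : σ} {g : ℕ → MvPowerSeries σ R} {s : MvPowerSeries σ R}
    (hs : ∀ m, coeff m s = ∑ n ∈ Finset.range (m i + 1), coeff (m - Finsupp.single i n) (g n)) :
    HasSum (fun n => X i ^ n * g n) s := by
  refine WithPiTopology.hasSum_iff_hasSum_coeff.2 fun m => ?_
  simp only [coeff_X_pow_mul_eq_ite, hs]
  rw [Finset.sum_congr rfl fun n hn => (if_pos (Finset.mem_range_succ_iff.1 hn)).symm]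
  exact hasSum_sum_of_ne_finset_zero fun n hn => if_neg (mt Finset.mem_range_succ_iff.2 hn)

theorem continuous_of_coeff_eq_sum_range [ContinuousAdd R] {i : σ}
    {T : ℕ → MvPowerSeries σ R → MvPowerSeries σ R} {S : MvPowerSeries σ R → MvPowerSeries σ R}
    (hT : ∀ n, Continuous (T n))
    (hS : ∀ f m, coeff m (S f) =
      ∑ n ∈ Finset.range (m i + 1), coeff (m - Finsupp.single i n) (T n f)) :
    Continuous S :=
  continuous_pi fun m => by
    change Continuous fun f => coeff m (S f)
    simp only [hS]
    exact continuous_finsetSum _ fun n _ => (WithPiTopology.continuous_coeff R _).comp (hT n)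

theorem hasSum_X_mul {g : σ → MvPowerSeries σ R} {s : MvPowerSeries σ R}
    (hs : ∀ m, coeff m s = ∑ i ∈ m.support, coeff (m - Finsupp.single i 1) (g i)) :
    HasSum (fun i => X i * g i) s := by
  classical
  refine WithPiTopology.hasSum_iff_hasSum_coeff.2 fun m => ?_
  have hcoeff (i : σ) : coeff m (X i * g i) =
      if i ∈ m.support then coeff (m - Finsupp.single i 1) (g i) else 0 := by
    simpa [Nat.one_le_iff_ne_zero] using coeff_X_pow_mul_eq_ite i 1 (g i) m
  simp only [hcoeff, hs]
  rw [Finset.sum_congr rfl fun i hi => (if_pos hi).symm]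
  exact hasSum_sum_of_ne_finset_zero fun i hi => if_neg hi

theorem hasSum_pderiv_X_mul (i : σ) (g : σ → MvPowerSeries σ R) :
    HasSum (fun j => pderiv R i (X j) * g j) (g i) := by
  convert hasSum_single i fun j hj => ?_ using 1
  · rw [pderiv_X_self, one_mul]
  · rw [pderiv_X_of_ne hj, zero_mul]

end MvPowerSeries

local instance : TopologicalSpace Base := ⊥

local instance : DiscreteTopology Base := ⟨rfl⟩

theorem pdP_eq_pderiv (k : ℕ) : pdP k = pderiv Base (some (Sum.inl k)) := by
  ext f m
  rw [coeff_pderiv, mul_comm]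
  rfl

theorem pdQ_eq_pderiv (k : ℕ) : pdQ k = pderiv Base (some (Sum.inr k)) := by
  ext f m
  rw [coeff_pderiv, mul_comm]
  rfl

theorem Dop_eq_pderiv : Dop = pderiv Base (some (Sum.inl 0)) :=
  pdP_eq_pderiv 0

theorem epsB_ne_zero : epsB ≠ 0 :=
  fun h => by simpa [epsB] using congrArg (coeff (Finsupp.single none 1)) h

theorem pderiv_epsB_pow {i : Idx} (hi : i ≠ none) (n : ℕ) : pderiv Base i (epsB ^ n) = 0 := by
  rw [Derivation.leibniz_pow, epsB, pderiv_X_of_ne hi.symm]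
  simp only [smul_zero]

theorem pdQ_comm (i j : ℕ) (f : B) : pdQ i (pdQ j f) = pdQ j (pdQ i f) := by
  simp only [pdQ_eq_pderiv, pderiv_pderiv_comm]

theorem Dop_pdQ (i : ℕ) (f : B) : Dop (pdQ i f) = pdQ i (Dop f) := by
  simp only [Dop_eq_pderiv, pdQ_eq_pderiv, pderiv_pderiv_comm]

theorem pdQ_mul (i : ℕ) (f g : B) : pdQ i (f * g) = pdQ i f * g + f * pdQ i g := by
  rw [pdQ_eq_pderiv, Derivation.leibniz, smul_eq_mul, smul_eq_mul, mul_comm g, add_comm]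

theorem pdQ_epsB_pow_mul (i n : ℕ) (f : B) : pdQ i (epsB ^ n * f) = epsB ^ n * pdQ i f := by
  rw [pdQ_eq_pderiv, Derivation.leibniz, pderiv_epsB_pow (by simp), smul_zero, add_zero,
    smul_eq_mul]

/-- The partial derivative in a variable of the large phase space as a continuous linear map. -/
def pderivCLM (i : Idx) : B →L[ℚ] B where
  toLinearMap := (pderiv Base i).toLinearMap.restrictScalars ℚ
  cont := continuous_pderiv i

theorem pdQ_eq_pderivCLM (k : ℕ) : pdQ k = pderivCLM (some (Sum.inr k)) :=
  pdQ_eq_pderiv k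

theorem Dop_eq_pderivCLM : Dop = pderivCLM (some (Sum.inl 0)) :=
  Dop_eq_pderiv

/-- The operator `Σₙ aₙ εⁿ ∂ⁿ`. The operators `E^c` and `Δ` are of this form, and `∇` is of this
form composed with `∂`. -/
def epsOp (a : ℕ → ℚ) : B →L[ℚ] B where
  toLinearMap := AddMonoidHom.toRatLinearMap <| AddMonoidHom.mk'
    (fun f => mk' fun m => ∑ n ∈ Finset.range (m none + 1),
      a n • cf (Dop^[n] f) (m - Finsupp.single none n)) fun f g => by
    funext m
    simp only [Dop_eq_pderiv, iterate_map_add]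
    exact Eq.trans (Finset.sum_congr rfl fun n _ => smul_add (a n) (cf _ _) (cf _ _))
      Finset.sum_add_distrib
  cont := by
    have hDop : Continuous Dop := Dop_eq_pderivCLM ▸ (pderivCLM _).continuous
    exact continuous_of_coeff_eq_sum_range (fun n => (hDop.iterate n).const_smul (a n))
      fun _ _ => rfl

theorem coeff_epsOp (a : ℕ → ℚ) (f : B) (m : Idx →₀ ℕ) :
    coeff m (epsOp a f) = ∑ n ∈ Finset.range (m none + 1),
      coeff (m - Finsupp.single none n) (a n • Dop^[n] f) := rfl

theorem hasSum_epsOp (a : ℕ → ℚ) (f : B) :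
    HasSum (fun n => epsB ^ n * a n • Dop^[n] f) (epsOp a f) :=
  hasSum_X_pow_mul (coeff_epsOp a f)

theorem epsOp_eq_sum_of_iterate_Dop_eq_zero (a : ℕ → ℚ) {N : ℕ} {f : B} (hf : Dop^[N] f = 0) :
    epsOp a f = ∑ n ∈ Finset.range N, epsB ^ n * a n • Dop^[n] f := by
  refine (hasSum_epsOp a f).unique (hasSum_sum_of_ne_finset_zero fun n hn => ?_)
  obtain ⟨l, rfl⟩ := Nat.exists_eq_add_of_le' (not_lt.1 (mt Finset.mem_range.2 hn))
  rw [Function.iterate_add_apply, hf, Dop_eq_pderiv, iterate_map_zero, smul_zero, mul_zero]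

theorem epsOp_pdQ (a : ℕ → ℚ) (i : ℕ) (f : B) : epsOp a (pdQ i f) = pdQ i (epsOp a f) := by
  have hterm (n : ℕ) : pdQ i (epsB ^ n * a n • Dop^[n] f) =
      epsB ^ n * a n • Dop^[n] (pdQ i f) := by
    rw [pdQ_epsB_pow_mul, Function.Commute.iterate_left (g := pdQ i) (Dop_pdQ i) n f,
      pdQ_eq_pderivCLM, map_smul]
  have h := (pderivCLM (some (Sum.inr i))).hasSum (hasSum_epsOp a f)
  simp only [← pdQ_eq_pderivCLM, hterm] at h
  exact (hasSum_epsOp a (pdQ i f)).unique h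

theorem Ec_eq_epsOp (c : ℚ) : Ec c = epsOp fun n => c ^ n / n ! := rfl

theorem hasSum_Ec (c : ℚ) (f : B) :
    HasSum (fun n => (n ! : ℚ)⁻¹ •
      (⇑((c • epsB) • pderiv Base (some (Sum.inl 0)) : Derivation Base B B))^[n] f) (Ec c f) := by
  have hε : pderiv Base (some (Sum.inl 0)) (c • epsB) = 0 := by
    rw [map_rat_smul, ← pow_one epsB, pderiv_epsB_pow (by simp), smul_zero]
  rw [Ec_eq_epsOp]
  convert hasSum_epsOp (fun n => c ^ n / n !) f using 2 with n
  rw [derivation_smul_iterate_apply _ hε, smul_pow, Dop_eq_pderiv, smul_mul_assoc, smul_smul,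
    mul_smul_comm, div_eq_inv_mul]

theorem Ec_mul (c : ℚ) (f g : B) : Ec c (f * g) = Ec c f * Ec c g :=
  (hasSum_Ec c (f * g)).unique (hasSum_derivation_exp_mul _ (hasSum_Ec c f) (hasSum_Ec c g))

/-- `Δ = E^{1/2} + E^{−1/2}` as a continuous linear map. -/
def DeltaCLM : B →L[ℚ] B :=
  epsOp fun n => ((1 / 2 : ℚ) ^ n + (-1 / 2 : ℚ) ^ n) / n !

theorem Delta_eq_DeltaCLM : Delta = DeltaCLM := rfl

theorem nab_eq_epsOp_Dop (f : B) :
    nab f = epsOp (fun n => ((1 / 2 : ℚ) ^ (n + 1) - (-1 / 2 : ℚ) ^ (n + 1)) / (n + 1)!) (Dop f) :=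
  rfl

/-- `∇ = ε⁻¹(E^{1/2} − E^{−1/2})` as a continuous linear map. -/
def nabCLM : B →L[ℚ] B :=
  (epsOp fun n => ((1 / 2 : ℚ) ^ (n + 1) - (-1 / 2 : ℚ) ^ (n + 1)) / (n + 1)!).comp
    (pderivCLM (some (Sum.inl 0)))

theorem nab_eq_nabCLM : nab = nabCLM := by
  funext f
  rw [nab_eq_epsOp_Dop, Dop_eq_pderivCLM]
  rfl

theorem Delta_eq_Ec (f : B) : Delta f = Ec (1 / 2) f + Ec (-1 / 2) f := by
  have h := (hasSum_epsOp (fun n => (1 / 2) ^ n / n !) f).add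
    (hasSum_epsOp (fun n => (-1 / 2) ^ n / n !) f)
  simp only [← mul_add, ← add_smul, ← add_div] at h
  exact (hasSum_epsOp _ f).unique h

theorem epsB_mul_nab (f : B) : epsB * nab f = Ec (1 / 2) f - Ec (-1 / 2) f := by
  have h := (hasSum_nat_add_iff' 1).2 ((hasSum_epsOp (fun n => (1 / 2) ^ n / n !) f).sub
    (hasSum_epsOp (fun n => (-1 / 2) ^ n / n !) f))
  simp only [← mul_sub, ← sub_smul, ← sub_div, Finset.sum_range_one, pow_zero, sub_self, zero_div,
    zero_smul, mul_zero, sub_zero, pow_succ' epsB, mul_assoc, Function.iterate_succ_apply] at h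
  exact ((hasSum_epsOp _ (Dop f)).mul_left epsB).unique h

/-- `𝒟 = v∇ + Δ∘∂_Q` as a continuous linear map. -/
def DcalCLM : B →L[ℚ] B :=
  vB F • nabCLM + DeltaCLM.comp (pderivCLM (some (Sum.inr 0)))

theorem Dcal_eq_DcalCLM : Dcal F = DcalCLM F := by
  funext f
  rw [Dcal, pdQ_eq_pderivCLM, nab_eq_nabCLM, Delta_eq_DeltaCLM]
  rfl

local instance : CharZero B := algebraRat.charZero B

theorem two_mul_nab_mul (f g : B) : 2 * nab (f * g) = nab f * Delta g + Delta f * nab g := by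
  refine mul_left_cancel₀ epsB_ne_zero ?_
  have h := epsB_mul_nab (f * g)
  rw [Ec_mul, Ec_mul] at h
  rw [Delta_eq_Ec, Delta_eq_Ec]
  linear_combination 2 * h - (Ec (1 / 2) g + Ec (-1 / 2) g) * epsB_mul_nab f -
    (Ec (1 / 2) f + Ec (-1 / 2) f) * epsB_mul_nab g

theorem two_mul_Delta_mul (f g : B) :
    2 * Delta (f * g) = Delta f * Delta g + epsB ^ 2 * (nab f * nab g) := by
  rw [Delta_eq_Ec, Delta_eq_Ec, Delta_eq_Ec, Ec_mul, Ec_mul]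
  linear_combination -epsB * nab g * epsB_mul_nab f -
    (Ec (1 / 2) f - Ec (-1 / 2) f) * epsB_mul_nab g

theorem nab_eq_Dop_of_Dop_Dop_eq_zero {a : B} (ha : Dop (Dop a) = 0) : nab a = Dop a := by
  rw [nab_eq_epsOp_Dop, epsOp_eq_sum_of_iterate_Dop_eq_zero _ (N := 1) ha]
  norm_num

theorem Delta_eq_two_mul_of_Dop_Dop_eq_zero {a : B} (ha : Dop (Dop a) = 0) :
    Delta a = 2 * a := by
  rw [Delta_eq_DeltaCLM, DeltaCLM, epsOp_eq_sum_of_iterate_Dop_eq_zero _ (N := 2) ha]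
  norm_num [Finset.sum_range_succ, ofNat_smul_eq_nsmul]

theorem two_mul_nab_mul_of_Dop_Dop_eq_zero {a : B} (ha : Dop (Dop a) = 0) (f : B) :
    2 * nab (a * f) = 2 * (a * nab f) + Dop a * Delta f := by
  rw [two_mul_nab_mul, nab_eq_Dop_of_Dop_Dop_eq_zero ha, Delta_eq_two_mul_of_Dop_Dop_eq_zero ha]
  ring

theorem nab_pdQ (i : ℕ) (f : B) : nab (pdQ i f) = pdQ i (nab f) := by
  rw [nab_eq_epsOp_Dop, nab_eq_epsOp_Dop, Dop_pdQ, epsOp_pdQ]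

theorem Delta_pdQ (i : ℕ) (f : B) : Delta (pdQ i f) = pdQ i (Delta f) := by
  rw [Delta_eq_DeltaCLM, DeltaCLM, epsOp_pdQ]

theorem pdQ_vB (i : ℕ) : pdQ i (vB F) = nab (pdQ 0 (pdQ i F)) := by
  rw [vB, ← nab_pdQ, pdQ_comm]

theorem pdQ_Dcal (i : ℕ) (f : B) :
    pdQ i (Dcal F f) = Dcal F (pdQ i f) + nab (pdQ 0 (pdQ i F)) * nab f := by
  have hadd (g h : B) : pdQ i (g + h) = pdQ i g + pdQ i h := by rw [pdQ_eq_pderivCLM, map_add]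
  rw [Dcal, Dcal, hadd, pdQ_mul, pdQ_vB, ← nab_pdQ, ← Delta_pdQ, pdQ_comm i 0 f]
  ring

theorem two_mul_Dcal_mul (f g : B) :
    2 * Dcal F (f * g) = Dcal F f * Delta g + Delta f * Dcal F g +
      epsB ^ 2 * (nab (pdQ 0 f) * nab g + nab f * nab (pdQ 0 g)) := by
  have hDelta : Delta (pdQ 0 (f * g)) = Delta (pdQ 0 f * g) + Delta (f * pdQ 0 g) := by
    rw [pdQ_mul, Delta_eq_DeltaCLM, map_add]
  rw [Dcal, Dcal, Dcal, hDelta]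
  linear_combination vB F * two_mul_nab_mul f g + two_mul_Delta_mul (pdQ 0 f) g +
    two_mul_Delta_mul f (pdQ 0 g)

theorem two_mul_Dcal_mul_of_Dop_Dop_eq_zero {a : B} (ha : Dop (Dop a) = 0)
    (ha' : Dop (pdQ 0 a) = 0) (f : B) :
    2 * Dcal F (a * f) = 2 * (a * Dcal F f) +
      Dop a * (vB F * Delta f + epsB ^ 2 * nab (pdQ 0 f)) + 2 * (pdQ 0 a * Delta f) := by
  have ha'' : Dop (Dop (pdQ 0 a)) = 0 := by rw [ha', Dop_eq_pderiv, map_zero]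
  rw [two_mul_Dcal_mul, Dcal, nab_eq_Dop_of_Dop_Dop_eq_zero ha, nab_eq_Dop_of_Dop_Dop_eq_zero ha'',
    Delta_eq_two_mul_of_Dop_Dop_eq_zero ha, Delta_eq_two_mul_of_Dop_Dop_eq_zero ha'', ha']
  ring

theorem nab_epsB_sq_mul (f : B) : nab (epsB ^ 2 * f) = epsB ^ 2 * nab f := by
  have hDop : Dop (epsB ^ 2) = 0 := by rw [Dop_eq_pderiv, pderiv_epsB_pow (by simp)]
  have h := two_mul_nab_mul_of_Dop_Dop_eq_zero (by rw [hDop, Dop_eq_pderiv, map_zero]) f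
  rw [hDop, zero_mul, add_zero] at h
  exact mul_left_cancel₀ two_ne_zero h

theorem Dcal_epsB_sq_mul (f : B) : Dcal F (epsB ^ 2 * f) = epsB ^ 2 * Dcal F f := by
  have hDop : Dop (epsB ^ 2) = 0 := by rw [Dop_eq_pderiv, pderiv_epsB_pow (by simp)]
  have hpdQ : pdQ 0 (epsB ^ 2) = 0 := by rw [pdQ_eq_pderiv, pderiv_epsB_pow (by simp)]
  have h := two_mul_Dcal_mul_of_Dop_Dop_eq_zero F (by rw [hDop, Dop_eq_pderiv, map_zero])
    (by rw [hpdQ, Dop_eq_pderiv, map_zero]) f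
  rw [hDop, hpdQ, zero_mul, zero_mul, mul_zero, add_zero, add_zero] at h
  exact mul_left_cancel₀ two_ne_zero h

section WeightedConv

variable {M N : Type*} [AddCommGroup M] [Module ℚ M] [AddCommGroup N] [Module ℚ N]

/-- The convolution `Σ_{i+j=n+1, i,j≥1} i! j! f(i−1, j−1)` of the quadratic part of a Virasoro
constraint. -/
def weightedConv (n : ℕ) (f : ℕ → ℕ → M) : M :=
  ∑ i ∈ Finset.range n, ((i + 1)! * (n - i)! : ℚ) • f i (n - 1 - i)

theorem map_weightedConv {L : Type*} [FunLike L M N] [AddMonoidHomClass L M N] (T : L) (n : ℕ)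
    (f : ℕ → ℕ → M) : T (weightedConv n f) = weightedConv n fun i j => T (f i j) := by
  simp only [weightedConv, map_sum, map_rat_smul]

theorem weightedConv_add (n : ℕ) (f g : ℕ → ℕ → M) :
    weightedConv n (fun i j => f i j + g i j) = weightedConv n f + weightedConv n g := by
  simp only [weightedConv, smul_add, Finset.sum_add_distrib]

theorem weightedConv_sub (n : ℕ) (f g : ℕ → ℕ → M) :
    weightedConv n (fun i j => f i j - g i j) = weightedConv n f - weightedConv n g := by
  simp only [weightedConv, smul_sub, Finset.sum_sub_distrib]

theorem weightedConv_swap (n : ℕ) (f : ℕ → ℕ → M) :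
    weightedConv n (fun i j => f j i) = weightedConv n f := by
  rw [weightedConv, ← Finset.sum_range_reflect]
  refine Finset.sum_congr rfl fun i hi => ?_
  have hi := Finset.mem_range.1 hi
  rw [show n - 1 - i + 1 = n - i by lia, show n - (n - 1 - i) = i + 1 by lia,
    show n - 1 - (n - 1 - i) = i by lia, mul_comm]

theorem weightedConv_congr_of_add_swap {n : ℕ} {f g : ℕ → ℕ → M}
    (h : ∀ i j, f i j + f j i = g i j + g j i) : weightedConv n f = weightedConv n g := by
  have htwo (e : ℕ → ℕ → M) : (2 : ℚ) • weightedConv n e =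
      weightedConv n fun i j => e i j + e j i := by
    rw [weightedConv_add, weightedConv_swap, two_smul]
  refine smul_right_injective M (two_ne_zero' ℚ) ?_
  simp only [htwo, h]

theorem weightedConv_succ (n : ℕ) (f : ℕ → ℕ → M) :
    weightedConv (n + 1) f =
      weightedConv n (fun i j => (j + 2 : ℚ) • f i (j + 1)) + ((n + 1)! : ℚ) • f n 0 := by
  rw [weightedConv, Finset.sum_range_succ]
  congr 1
  · refine Finset.sum_congr rfl fun i hi => ?_
    obtain ⟨j, rfl⟩ := Nat.exists_eq_add_of_le (Finset.mem_range.1 hi)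
    rw [smul_smul, show i + 1 + j + 1 - i = j + 1 + 1 by lia, show i + 1 + j - i = j + 1 by lia,
      show i + 1 + j + 1 - 1 - i = j + 1 by lia, show i + 1 + j - 1 - i = j by lia,
      Nat.factorial_succ (j + 1)]
    push_cast
    module
  · simp

end WeightedConv

theorem quad_natCast_add_one (n : ℕ) :
    quad F (n + 1 : ℕ) =
      weightedConv n fun i j => epsB ^ 2 * pdQ i (pdQ j F) + pdQ i F * pdQ j F := by
  rw [quad, weightedConv, show (((n + 1 : ℕ) : ℤ) - 1).toNat = n by lia]
  refine Finset.sum_congr rfl fun i _ => ?_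
  rw [show (((n + 1 : ℕ) : ℤ) - (i + 1)).toNat = n - i by lia,
    show (((n + 1 : ℕ) : ℤ) - (i + 2)).toNat = n - 1 - i by lia]

theorem nab_quad (n : ℕ) :
    nab (quad F (n + 1 : ℕ)) = weightedConv n fun i j =>
      epsB ^ 2 * pdQ i (nab (pdQ j F)) + Delta (pdQ i F) * nab (pdQ j F) := by
  have hadd (f g : B) : nab (f + g) = nab f + nab g := by rw [nab_eq_nabCLM, map_add]
  rw [quad_natCast_add_one, nab_eq_nabCLM, map_weightedConv]
  simp only [← nab_eq_nabCLM]
  refine weightedConv_congr_of_add_swap fun i j => ?_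
  rw [hadd, hadd, nab_epsB_sq_mul, nab_epsB_sq_mul, nab_pdQ i, nab_pdQ j (pdQ i F),
    mul_comm (pdQ j F)]
  linear_combination two_mul_nab_mul (pdQ i F) (pdQ j F)

theorem Dcal_quad (n : ℕ) :
    Dcal F (quad F (n + 1 : ℕ)) = weightedConv n fun i j =>
      epsB ^ 2 * pdQ i (Dcal F (pdQ j F)) + Delta (pdQ i F) * Dcal F (pdQ j F) := by
  have hadd (f g : B) : Dcal F (f + g) = Dcal F f + Dcal F g := by rw [Dcal_eq_DcalCLM, map_add]
  rw [quad_natCast_add_one, Dcal_eq_DcalCLM, map_weightedConv]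
  simp only [← Dcal_eq_DcalCLM]
  refine weightedConv_congr_of_add_swap fun i j => ?_
  rw [hadd, hadd, Dcal_epsB_sq_mul, Dcal_epsB_sq_mul, pdQ_Dcal, pdQ_Dcal, mul_comm (pdQ j F)]
  linear_combination two_mul_Dcal_mul F (pdQ i F) (pdQ j F)

/-- The term `i = k` of `∇` of the quadratic part of `z_{k+1}`, up to the factor `k!`, with
`k = n + 1`. -/
def boundaryTerm (n : ℕ) : B :=
  epsB ^ 2 * pdQ n (vB F) + Delta (pdQ n F) * vB F

theorem Dcal_quad_sub_nab_quad (n : ℕ) :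
    Dcal F (quad F (n + 1 : ℕ)) - nab (quad F (n + 2 : ℕ)) =
      weightedConv n (fun i j => epsB ^ 2 * pdQ i (y F j) + Delta (pdQ i F) * y F j) -
        ((n + 1)! : ℚ) • boundaryTerm F n := by
  rw [Dcal_quad, nab_quad, weightedConv_succ, ← sub_sub, ← weightedConv_sub, boundaryTerm, vB]
  congr 2
  funext i j
  rw [y, pdQ_eq_pderivCLM i, map_sub, map_smul, mul_sub, mul_sub, mul_smul_comm, mul_smul_comm]
  module

theorem cc_succ (k m : ℕ) : cc (k + 1 : ℕ) m = cc k m * (m + k + 1) := by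
  rw [cc, cc, show (((k + 1 : ℕ) : ℤ) + 1).toNat = k + 1 + 1 by lia,
    show ((k : ℤ) + 1).toNat = k + 1 by lia, Finset.prod_range_succ]
  push_cast
  ring

theorem dd_succ (k m : ℕ) : dd (k + 1 : ℕ) m = dd k m * (m + k + 1) + cc k m := by
  rw [cc, dd, dd, show (((k + 1 : ℕ) : ℤ) + 1).toNat = k + 1 + 1 by lia,
    show ((k : ℤ) + 1).toNat = k + 1 by lia, Finset.sum_range_succ,
    Finset.range_add_one (n := k + 1), Finset.erase_insert Finset.notMem_range_self,
    Finset.sum_mul]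
  congr 1
  refine Finset.sum_congr rfl fun j hj => ?_
  rw [Finset.erase_insert_of_ne (Finset.mem_range.1 hj).ne', Finset.prod_insert (by simp)]
  push_cast
  ring

theorem cc_zero_right (k : ℕ) : cc k 0 = 0 :=
  Finset.prod_eq_zero (i := 0) (Finset.mem_range.2 (by lia)) (by simp)

theorem cc_one_right (k : ℕ) : cc k 1 = (k + 1)! := by
  induction k with
  | zero => simp [cc]
  | succ k ih =>
    rw [cc_succ, ih, Nat.factorial_succ (k + 1)]
    push_cast
    ring

theorem dd_zero_right (k : ℕ) : dd k 0 = k ! := by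
  induction k with
  | zero => simp [dd]
  | succ k ih =>
    rw [dd_succ, ih, cc_zero_right, Nat.factorial_succ]
    push_cast
    ring

/-- The formal sum `Σⱼ Xⱼ Gⱼ` over all variables of the large phase space. -/
def linComb (G : Idx → B) : B :=
  mk' fun μ => ∑ j ∈ μ.support, cf (G j) (μ - Finsupp.single j 1)

theorem hasSum_linComb (G : Idx → B) : HasSum (fun j => X j * G j) (linComb G) :=
  hasSum_X_mul fun _ => rfl

theorem linComb_sub (G H : Idx → B) :
    linComb (fun j => G j - H j) = linComb G - linComb H := by
  have h := (hasSum_linComb G).sub (hasSum_linComb H)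
  simp only [← mul_sub] at h
  exact (hasSum_linComb _).unique h

theorem two_mul_nab_linComb (G : Idx → B) :
    2 * nab (linComb G) =
      2 * linComb (fun j => nab (G j)) + Delta (G (some (Sum.inl 0))) := by
  have h := (nabCLM.hasSum (hasSum_linComb G)).mul_left 2
  simp only [← nab_eq_nabCLM] at h
  refine h.unique ?_
  convert ((hasSum_linComb fun j => nab (G j)).mul_left 2).add
    (hasSum_pderiv_X_mul (some (Sum.inl 0)) fun j => Delta (G j)) using 2 with j
  rw [two_mul_nab_mul_of_Dop_Dop_eq_zero] <;> simp only [Dop_eq_pderiv, pderiv_pderiv_X]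

theorem two_mul_Dcal_linComb (G : Idx → B) :
    2 * Dcal F (linComb G) = 2 * linComb (fun j => Dcal F (G j)) +
      (vB F * Delta (G (some (Sum.inl 0))) + epsB ^ 2 * nab (pdQ 0 (G (some (Sum.inl 0))))) +
      2 * Delta (G (some (Sum.inr 0))) := by
  have h := ((DcalCLM F).hasSum (hasSum_linComb G)).mul_left 2
  simp only [← Dcal_eq_DcalCLM] at h
  refine h.unique ?_
  convert (((hasSum_linComb fun j => Dcal F (G j)).mul_left 2).add
    (hasSum_pderiv_X_mul (some (Sum.inl 0)) fun j =>
      vB F * Delta (G j) + epsB ^ 2 * nab (pdQ 0 (G j)))).add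
    ((hasSum_pderiv_X_mul (some (Sum.inr 0)) fun j => Delta (G j)).mul_left 2) using 2 with j
  rw [two_mul_Dcal_mul_of_Dop_Dop_eq_zero] <;>
    simp only [Dop_eq_pderiv, pdQ_eq_pderiv, pderiv_pderiv_X]

/-- The coefficients of the variables in the linear part of `z_k`, where `k = n + 1`. -/
def virasoroCoeff (n : ℕ) : Idx → B
  | some (Sum.inr m) => cc (n + 1 : ℕ) (m + 1) • pdQ (m + n + 1) F
  | some (Sum.inl m) =>
      cc (n + 1 : ℕ) m • pdP (m + n + 1) F + (2 * dd (n + 1 : ℕ) m) • pdQ (m + n) F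
  | none => 0

/-- The coefficients of the variables in the linear part of `𝒟z_k − ∇z_{k+1}`, where
`k = n + 1`. -/
def todaCoeff (n : ℕ) : Idx → B
  | some (Sum.inr m) => cc (n + 1 : ℕ) (m + 1) • y F (m + n + 1)
  | some (Sum.inl m) =>
      cc (n + 1 : ℕ) m • x F (m + n + 1) + (2 * dd (n + 1 : ℕ) m) • y F (m + n)
  | none => 0

theorem Dcal_virasoroCoeff_sub_nab_virasoroCoeff (n : ℕ) (j : Idx) :
    Dcal F (virasoroCoeff F n j) - nab (virasoroCoeff F (n + 1) j) = todaCoeff F n j := by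
  rw [Dcal_eq_DcalCLM, nab_eq_nabCLM]
  rcases j with _ | m | m
  · simp only [virasoroCoeff, todaCoeff, map_zero, sub_self]
  · simp only [virasoroCoeff, todaCoeff, x, y, Dcal_eq_DcalCLM, nab_eq_nabCLM, cc_succ (n + 1),
      dd_succ (n + 1), map_add, map_smul, ← add_assoc]
    push_cast
    module
  · simp only [virasoroCoeff, todaCoeff, y, Dcal_eq_DcalCLM, nab_eq_nabCLM, cc_succ (n + 1),
      map_smul, ← add_assoc]
    push_cast
    module

theorem virasoroCoeff_inl_zero (n : ℕ) :
    virasoroCoeff F n (some (Sum.inl 0)) = (2 * (n + 1)! : ℚ) • pdQ n F := by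
  rw [virasoroCoeff, cc_zero_right, dd_zero_right, zero_smul, zero_add, zero_add]

theorem virasoroCoeff_inr_zero (n : ℕ) :
    virasoroCoeff F n (some (Sum.inr 0)) = ((n + 1 + 1)! : ℚ) • pdQ (n + 1) F := by
  rw [virasoroCoeff, cc_one_right, zero_add]

theorem Dcal_linComb_sub_nab_linComb (n : ℕ) :
    Dcal F (linComb (virasoroCoeff F n)) - nab (linComb (virasoroCoeff F (n + 1))) =
      linComb (todaCoeff F n) + ((n + 1)! : ℚ) • boundaryTerm F n := by
  have hcoeff := linComb_sub (fun j => Dcal F (virasoroCoeff F n j))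
    fun j => nab (virasoroCoeff F (n + 1) j)
  simp only [Dcal_virasoroCoeff_sub_nab_virasoroCoeff] at hcoeff
  have hDcal := two_mul_Dcal_linComb F (virasoroCoeff F n)
  have hnab := two_mul_nab_linComb (virasoroCoeff F (n + 1))
  rw [virasoroCoeff_inl_zero, virasoroCoeff_inr_zero] at hDcal
  rw [virasoroCoeff_inl_zero] at hnab
  refine mul_left_cancel₀ (two_ne_zero' B) ?_
  rw [mul_sub, hDcal, hnab, hcoeff, boundaryTerm, pdQ_vB, mul_comm (Delta (pdQ n F))]
  simp only [nab_eq_nabCLM, Delta_eq_DeltaCLM, pdQ_eq_pderivCLM 0, map_smul, mul_smul_comm,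
    two_mul]
  module

theorem z_natCast_add_one (n : ℕ) :
    z F (n + 1 : ℕ) = linComb (virasoroCoeff F n) - virasoroCoeff F n (some (Sum.inl 1)) +
      quad F (n + 1 : ℕ) := by
  have htauP (m : ℕ) : tauP F m = pdP m F := by simp [tauP]
  have htauQ (m : ℕ) : tauQ F m = pdQ m F := by simp [tauQ]
  have hadd (m : ℕ) : (m : ℤ) + (n + 1 : ℕ) = (m + n + 1 : ℕ) := by push_cast; ring
  have hsub (m : ℕ) : ((m + n + 1 : ℕ) : ℤ) - 1 = (m + n : ℕ) := by push_cast; ring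
  have hone : 1 + ((n + 1 : ℕ) : ℤ) = (1 + n + 1 : ℕ) := by push_cast; ring
  rw [z, if_neg (by lia), if_neg (by lia), add_zero, add_zero, sub_sub]
  simp only [hadd, hsub, hone, htauP, htauQ]
  rw [virasoroCoeff, add_comm 1 n]
  congr 2
  funext μ
  refine Finset.sum_congr rfl fun j _ => ?_
  rcases j with _ | m | m <;> rfl

theorem linComb_todaCoeff (n : ℕ) :
    linComb (todaCoeff F n) = mk' fun μ => ∑ j ∈ μ.support,
      match j with
      | some (Sum.inr m) =>
          cc (n + 1 : ℕ) (m + 1) • cf (y F (m + (n + 1))) (μ - Finsupp.single j 1)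
      | some (Sum.inl m) => cc (n + 1 : ℕ) m • cf (x F (m + (n + 1))) (μ - Finsupp.single j 1)
          + (2 * dd (n + 1 : ℕ) m) • cf (y F (m + (n + 1) - 1)) (μ - Finsupp.single j 1)
      | none => 0 := by
  funext μ
  refine Finset.sum_congr rfl fun j _ => ?_
  rcases j with _ | m | m <;> rfl

theorem virasoro_toda_master_identity (F : B) (k : ℕ) (hk : 1 ≤ k) :
    Dcal F (z F k) - nab (z F ((k : ℤ) + 1)) =
      mk' (fun μ => ∑ j ∈ μ.support,
        match j with
        | some (Sum.inr m) => cc k (m+1) • cf (y F (m + k)) (μ - Finsupp.single j 1)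
        | some (Sum.inl m) => cc k m • cf (x F (m + k)) (μ - Finsupp.single j 1)
            + (2 * dd k m) • cf (y F (m + k - 1)) (μ - Finsupp.single j 1)
        | none => 0)
      - cc k 1 • x F (k + 1) - (2 * dd k 1) • y F k
      + ∑ i ∈ Finset.range (k - 1),
          (((i+1).factorial * (k - (i+1)).factorial : ℚ)) •
            (epsB ^ 2 * pdQ i (y F (k - (i+2))) + Delta (pdQ i F) * y F (k - (i+2))) := by
  obtain ⟨n, rfl⟩ := Nat.exists_eq_add_of_le' hk
  have hlin := Dcal_linComb_sub_nab_linComb F n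
  have hdilaton := Dcal_virasoroCoeff_sub_nab_virasoroCoeff F n (some (Sum.inl 1))
  have hquad := Dcal_quad_sub_nab_quad F n
  have hconv : (∑ i ∈ Finset.range (n + 1 - 1), ((i + 1)! * (n + 1 - (i + 1))! : ℚ) •
      (epsB ^ 2 * pdQ i (y F (n + 1 - (i + 2))) + Delta (pdQ i F) * y F (n + 1 - (i + 2)))) =
      weightedConv n fun i j => epsB ^ 2 * pdQ i (y F j) + Delta (pdQ i F) * y F j := by
    simp only [weightedConv, Nat.add_sub_add_right, Nat.add_sub_cancel, Nat.sub_sub, add_comm 1]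
  rw [todaCoeff, add_comm 1 n] at hdilaton
  rw [hconv, ← linComb_todaCoeff, ← Nat.cast_succ, z_natCast_add_one, z_natCast_add_one]
  simp only [Dcal_eq_DcalCLM, nab_eq_nabCLM, map_add, map_sub] at hlin hdilaton hquad ⊢
  linear_combination hquad - hdilaton + hlin

end
end
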